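/- Let S be a measurable space and let P and Q be probability kernels from S to ℝ^d with finite first moments. Then P_θ ≤icx Q_θ holds for every θ ∈ S if and only if P and Q admit a pointwise coupling R such that R_θ is a submartingale coupling for every θ ∈ S. -/

import Mathlib

open MeasureTheory ProbabilityTheory Filter

noncomputable section

abbrev Euc (d : ℕ) : Type := EuclideanSpace ℝ (Fin d)

def FiniteFirstMoment {d : ℕ} (μ : Measure (Euc d)) : Prop :=
  Integrable (fun x => x) μ

def ConvexOrder {d : ℕ} (μ ν : Measure (Euc d)) : Prop :=
  ∀ φ : Euc d → ℝ, ConvexOn ℝ Set.univ φ → Integrable φ μ → Integrable φ ν →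
    ∫ x, φ x ∂μ ≤ ∫ x, φ x ∂ν

def CoordMono {d : ℕ} (φ : Euc d → ℝ) : Prop :=
  ∀ x y : Euc d, (∀ i, x i ≤ y i) → φ x ≤ φ y

def IncConvexOrder {d : ℕ} (μ ν : Measure (Euc d)) : Prop :=
  ∀ φ : Euc d → ℝ, ConvexOn ℝ Set.univ φ → CoordMono φ → Integrable φ μ → Integrable φ ν →
    ∫ x, φ x ∂μ ≤ ∫ x, φ x ∂ν

def IsCoupling {d : ℕ} (lam : Measure (Euc d × Euc d)) (μ ν : Measure (Euc d)) : Prop :=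
  lam.map Prod.fst = μ ∧ lam.map Prod.snd = ν

def fstSigma (d : ℕ) : MeasurableSpace (Euc d × Euc d) :=
  MeasurableSpace.comap Prod.fst inferInstance

def IsMartingaleCoupling {d : ℕ} (lam : Measure (Euc d × Euc d)) : Prop :=
  lam[(fun p : Euc d × Euc d => p.2) | fstSigma d] =ᵐ[lam] (fun p => p.1)

def IsSubmartingaleCoupling {d : ℕ} (lam : Measure (Euc d × Euc d)) : Prop :=
  ∀ᵐ p ∂lam, ∀ i, p.1 i ≤ (lam[(fun q : Euc d × Euc d => q.2) | fstSigma d]) p i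

/-!
By conditional Jensen, a submartingale coupling forces the increasing convex order.

Conversely, compactify `ℝ^d` to `[-∞, ∞]^d`. There the submartingale couplings of `P θ` and `Q θ`
are the probability measures `l` satisfying countably many inequalities `∫ h j ∂l ≤ b θ j` with
`h j` continuous and `b θ j` measurable in `θ`. By weak compactness and Hahn-Banach, such a system
is solvable as soon as every nonnegative finite combination of its inequalities holds at some point.
For a given combination, the minimum `m` of the left-hand side satisfies
`m ≤ u x + v y + ⟪G x, x - y⟫` with `G x ≥ 0` bounded and `∫ u ∂(P θ) + ∫ v ∂(Q θ)` at most the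
right-hand side. The supremum over `x` of `m - u x + ⟪G x, y - x⟫` is a convex increasing function
of `y` between `m - u` and `v`, and the increasing convex order applied to it bounds `m` by the
right-hand side.

The solution can be chosen measurably in `θ`: the compact metrizable space of probability measures
is a continuous image of the Cantor set, so one can take the least code of a solution.
-/

section Selection

variable {S B X : Type*} [MeasurableSpace S] [TopologicalSpace B] [MeasurableSpace B]
  [OpensMeasurableSpace B] {b : S → B}

theorem exists_measurable_selection_of_linearOrder {E : Type*} [LinearOrder E]
    [TopologicalSpace E] [OrderTopology E] [SecondCountableTopology E] [MeasurableSpace E]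
    [BorelSpace E] {K : Set E} (hK : IsCompact K) {F : Set (K × B)} (hF : IsClosed F)
    (hb : Measurable b) (hne : ∀ θ, ∃ x, (x, b θ) ∈ F) :
    ∃ r : S → K, Measurable r ∧ ∀ θ, (r θ, b θ) ∈ F := by
  have := isCompact_iff_compactSpace.1 hK
  have hleast (θ : S) : ∃ x, IsLeast {x : K | (x, b θ) ∈ F} x :=
    (hF.preimage (Continuous.prodMk_left (b θ))).isCompact.exists_isLeast (hne θ)
  choose r hr using hleast
  have hsublevel (t : E) :
      {θ | (r θ : E) ≤ t} = b ⁻¹' (Prod.snd '' (F ∩ {p | (p.1 : E) ≤ t})) := by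
    ext θ
    refine ⟨fun h => ⟨(r θ, b θ), ⟨(hr θ).1, h⟩, rfl⟩, ?_⟩
    rintro ⟨⟨x, _⟩, ⟨hxF, hxt⟩, rfl⟩
    exact le_trans ((hr θ).2 hxF : (r θ : E) ≤ x) hxt
  have hr_meas : Measurable fun θ => (r θ : E) := measurable_of_Iic fun t => by
    change MeasurableSet {θ | (r θ : E) ≤ t}
    rw [hsublevel]
    have hclosed : IsClosed (F ∩ {p | (p.1 : E) ≤ t}) :=
      hF.inter (isClosed_le (by fun_prop) continuous_const)
    exact hb (isClosedMap_snd_of_compactSpace _ hclosed).measurableSet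
  exact ⟨r, hr_meas.subtype_mk, fun θ => (hr θ).1⟩

theorem exists_borel_selection [TopologicalSpace X] [CompactSpace X]
    [TopologicalSpace.MetrizableSpace X] [Nonempty X] {F : Set (X × B)} (hF : IsClosed F)
    (hb : Measurable b) (hne : ∀ θ, ∃ x, (x, b θ) ∈ F) :
    ∃ r : S → X, Measurable[_, borel X] r ∧ ∀ θ, (r θ, b θ) ∈ F := by
  let := TopologicalSpace.metrizableSpaceMetric X
  let : MeasurableSpace X := borel X
  have : BorelSpace X := ⟨rfl⟩
  obtain ⟨f, hf, hf_surj⟩ := exists_nat_bool_continuous_surjective_of_compact X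
  have hg : Continuous (f ∘ cantorSetHomeomorphNatToBool) := hf.comp (Homeomorph.continuous _)
  have hg_surj : (f ∘ cantorSetHomeomorphNatToBool).Surjective :=
    hf_surj.comp (Homeomorph.surjective _)
  obtain ⟨c, hc, hcF⟩ := exists_measurable_selection_of_linearOrder isCompact_cantorSet
    (hF.preimage (hg.prodMap continuous_id)) hb fun θ =>
      let ⟨x, hx⟩ := hne θ
      let ⟨a, ha⟩ := hg_surj x
      ⟨a, by simpa [← ha] using hx⟩
  exact ⟨_, hg.measurable.comp hc, hcF⟩

end Selection

theorem exists_nonneg_dotProduct_lt_of_disjoint_Iic {ι : Type*} [Fintype ι] {K : Set (ι → ℝ)}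
    (hK : Convex ℝ K) (hK' : IsCompact K) {b : ι → ℝ} (hdisj : Disjoint K (Set.Iic b)) :
    ∃ w : ι → ℝ, 0 ≤ w ∧ ∀ x ∈ K, w ⬝ᵥ b < w ⬝ᵥ x := by
  classical
  obtain ⟨f, u, v, hfK, huv, hfb⟩ :=
    geometric_hahn_banach_compact_closed hK hK' (convex_Iic b) isClosed_Iic hdisj
  let w (i : ι) : ℝ := -f (Pi.single i 1)
  have hw (x : ι → ℝ) : w ⬝ᵥ x = -f x := by
    conv_rhs => rw [pi_eq_sum_univ' x]
    simp [w, dotProduct, mul_comm]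
  refine ⟨w, fun i => ?_, fun x hx => ?_⟩
  · by_contra! hneg
    have hpos : 0 < f (Pi.single i 1) := by simpa [w] using hneg
    obtain ⟨n, hn⟩ := exists_nat_gt ((f b - v) / f (Pi.single i 1))
    rw [div_lt_iff₀ hpos] at hn
    have hmem : b - (n : ℝ) • Pi.single i (1 : ℝ) ∈ Set.Iic b :=
      sub_le_self b (smul_nonneg n.cast_nonneg (Pi.single_nonneg.2 zero_le_one))
    have hlt := hfb _ hmem
    rw [map_sub, map_smul, smul_eq_mul] at hlt
    linarith
  · rw [hw, hw]
    linarith [hfK x hx, hfb b Set.self_mem_Iic]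

section MomentConstraints

variable {Z : Type*} [TopologicalSpace Z] [MeasurableSpace Z] [BorelSpace Z]

theorem measurable_toMeasure_of_continuous [HasOuterApproxClosed Z] {T : Type*}
    [TopologicalSpace T] [MeasurableSpace T] [OpensMeasurableSpace T]
    {ψ : T → ProbabilityMeasure Z} (hψ : Continuous ψ) :
    Measurable fun t => (ψ t : Measure Z) := by
  refine Measurable.measure_of_isPiSystem_of_isProbabilityMeasure
    (borel_eq_generateFrom_isClosed (α := Z) ▸ BorelSpace.measurable_eq) isPiSystem_isClosed ?_
  intro F (hF : IsClosed F)
  have happr (n : ℕ) : Measurable fun t => ∫⁻ z, hF.apprSeq n z ∂(ψ t : Measure Z) :=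
    ((ProbabilityMeasure.continuous_lintegral_boundedContinuousFunction _).comp hψ).measurable
  exact measurable_of_tendsto_metrizable happr <| tendsto_pi_nhds.2 fun t =>
    HasOuterApproxClosed.tendsto_lintegral_apprSeq hF (ψ t : Measure Z)

variable [CompactSpace Z]

theorem integrable_continuousMap (f : C(Z, ℝ)) (μ : Measure Z) [IsFiniteMeasure μ] :
    Integrable f μ :=
  f.continuous.integrable_of_hasCompactSupport (HasCompactSupport.of_compactSpace f)

theorem convex_range_integral {ι : Type*} (h : ι → C(Z, ℝ)) :
    Convex ℝ (Set.range fun (l : ProbabilityMeasure Z) i => ∫ z, h i z ∂(l : Measure Z)) := by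
  rintro _ ⟨l, rfl⟩ _ ⟨m, rfl⟩ s t hs ht hst
  have hmix : IsProbabilityMeasure (ENNReal.ofReal s • (l : Measure Z)
      + ENNReal.ofReal t • (m : Measure Z)) := by
    constructor
    simp [← ENNReal.ofReal_add hs ht, hst]
  refine ⟨⟨_, hmix⟩, funext fun i => ?_⟩
  have hl := (integrable_continuousMap (h i) l).smul_measure (ENNReal.ofReal_ne_top (r := s))
  have hm := (integrable_continuousMap (h i) m).smul_measure (ENNReal.ofReal_ne_top (r := t))
  simp [integral_add_measure hl hm, integral_smul_measure, ENNReal.toReal_ofReal, hs, ht]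

variable [TopologicalSpace.MetrizableSpace Z]

theorem exists_probabilityMeasure_of_fintype {ι : Type*} [Fintype ι] (h : ι → C(Z, ℝ))
    (b : ι → ℝ) (H : ∀ w : ι → ℝ, 0 ≤ w → ∃ z, ∑ i, w i * h i z ≤ ∑ i, w i * b i) :
    ∃ l : ProbabilityMeasure Z, ∀ i, ∫ z, h i z ∂(l : Measure Z) ≤ b i := by
  by_contra! hcon
  have hcompact : IsCompact
      (Set.range fun (l : ProbabilityMeasure Z) i => ∫ z, h i z ∂(l : Measure Z)) :=
    isCompact_range <| continuous_pi fun i =>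
      ProbabilityMeasure.continuous_integral_continuousMap (h i)
  have hdisj : Disjoint
      (Set.range fun (l : ProbabilityMeasure Z) i => ∫ z, h i z ∂(l : Measure Z)) (Set.Iic b) := by
    rw [Set.disjoint_left]
    rintro _ ⟨l, rfl⟩ hl
    obtain ⟨i, hi⟩ := hcon l
    exact hi.not_ge (hl i)
  obtain ⟨w, hw, hlt⟩ :=
    exists_nonneg_dotProduct_lt_of_disjoint_Iic (convex_range_integral h) hcompact hdisj
  obtain ⟨z, hz⟩ := H w hw
  have hdirac (i : ι) : ∫ y, h i y ∂(Measure.dirac z) = h i z :=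
    integral_dirac' _ _ (h i).continuous.stronglyMeasurable
  have hltz := hlt _ ⟨⟨Measure.dirac z, inferInstance⟩, rfl⟩
  simp only [ProbabilityMeasure.coe_mk, hdirac] at hltz
  exact hltz.not_ge hz

theorem exists_probabilityMeasure_forall_integral_le {ι : Type*} (h : ι → C(Z, ℝ)) (b : ι → ℝ)
    (H : ∀ (s : Finset ι) (w : ι → ℝ), 0 ≤ w →
      ∃ z, ∑ i ∈ s, w i * h i z ≤ ∑ i ∈ s, w i * b i) :
    ∃ l : ProbabilityMeasure Z, ∀ i, ∫ z, h i z ∂(l : Measure Z) ≤ b i := by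
  classical
  have hclosed (i : ι) : IsClosed {l : ProbabilityMeasure Z | ∫ z, h i z ∂(l : Measure Z) ≤ b i} :=
    isClosed_le (ProbabilityMeasure.continuous_integral_continuousMap (h i)) continuous_const
  have hfinite (s : Finset ι) : (Set.univ ∩ ⋂ i ∈ s,
      {l : ProbabilityMeasure Z | ∫ z, h i z ∂(l : Measure Z) ≤ b i}).Nonempty := by
    obtain ⟨l, hl⟩ := exists_probabilityMeasure_of_fintype (fun i : s => h i) (fun i => b i) (by
      intro w hw
      obtain ⟨z, hz⟩ := H s (fun i => if hi : i ∈ s then w ⟨i, hi⟩ else 0) (fun i => by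
        dsimp only
        split
        exacts [hw _, le_rfl])
      refine ⟨z, ?_⟩
      rw [← Finset.sum_coe_sort s, ← Finset.sum_coe_sort s] at hz
      simpa using hz)
    exact ⟨l, by simpa using hl⟩
  obtain ⟨l, -, hl⟩ := isCompact_univ.inter_iInter_nonempty _ hclosed hfinite
  exact ⟨l, by simpa using hl⟩

theorem exists_kernel_forall_integral_le {S ι : Type*} [MeasurableSpace S] [Countable ι]
    (h : ι → C(Z, ℝ)) {b : S → ι → ℝ} (hb : Measurable b)
    (H : ∀ θ, ∃ l : ProbabilityMeasure Z, ∀ i, ∫ z, h i z ∂(l : Measure Z) ≤ b θ i) :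
    ∃ κ : Kernel S Z, IsMarkovKernel κ ∧ ∀ θ i, ∫ z, h i z ∂(κ θ) ≤ b θ i := by
  rcases isEmpty_or_nonempty S with hS | ⟨⟨θ₀⟩⟩
  · exact ⟨0, ⟨isEmptyElim⟩, isEmptyElim⟩
  have : Nonempty (ProbabilityMeasure Z) := ⟨(H θ₀).choose⟩
  have hF : IsClosed {p : ProbabilityMeasure Z × (ι → ℝ) |
      ∀ i, ∫ z, h i z ∂(p.1 : Measure Z) ≤ p.2 i} := by
    simp only [Set.ofPred_forall]
    refine isClosed_iInter fun i => isClosed_le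
      ((ProbabilityMeasure.continuous_integral_continuousMap (h i)).comp continuous_fst) ?_
    fun_prop
  obtain ⟨r, hr, hrF⟩ := exists_borel_selection hF hb H
  let : MeasurableSpace (ProbabilityMeasure Z) := borel _
  have : BorelSpace (ProbabilityMeasure Z) := ⟨rfl⟩
  exact ⟨⟨fun θ => (r θ : Measure Z), (measurable_toMeasure_of_continuous continuous_id).comp hr⟩,
    ⟨fun θ => (r θ).2⟩, hrF⟩

end MomentConstraints

theorem integral_map_withDensity_ofReal {Ω Z : Type*} [MeasurableSpace Ω] {Γ : Measure Ω}
    [MeasurableSpace Z] {T : Ω → Z} {ξ : Ω → ℝ} (hT : Measurable T) (hξ : AEMeasurable ξ Γ)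
    {f : Z → ℝ} (hf : Measurable f) :
    ∫ z, f z ∂((Γ.withDensity fun ω => ENNReal.ofReal (ξ ω)).map T) =
      ∫ ω, f (T ω) * max (ξ ω) 0 ∂Γ := by
  rw [integral_map hT.aemeasurable hf.aestronglyMeasurable,
    integral_withDensity_eq_integral_toReal_smul₀ hξ.ennreal_ofReal
      (ae_of_all _ fun _ => ENNReal.ofReal_lt_top)]
  simp only [ENNReal.toReal_ofReal', smul_eq_mul, mul_comm]

section TestFunctions

variable {Z ι : Type*} [TopologicalSpace Z] [CompactSpace Z] [MeasurableSpace Z] [BorelSpace Z]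

theorem continuous_integral_continuousMap (M : Measure Z) [IsFiniteMeasure M] :
    Continuous fun f : C(Z, ℝ) => ∫ z, f z ∂M := by
  have hLp : Continuous fun f : C(Z, ℝ) => ∫ z, ContinuousMap.toLp (E := ℝ) 1 M ℝ f z ∂M :=
    continuous_integral.comp (ContinuousMap.toLp (E := ℝ) 1 M ℝ).continuous
  exact hLp.congr fun f => integral_congr_ae (ContinuousMap.coeFn_toLp M f)

variable [TopologicalSpace.PseudoMetrizableSpace Z]

theorem measure_le_of_forall_integral_continuousMap_le {M N : Measure Z} [IsFiniteMeasure M]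
    [IsFiniteMeasure N] (h : ∀ f : C(Z, ℝ), 0 ≤ f → ∫ z, f z ∂M ≤ ∫ z, f z ∂N) : M ≤ N := by
  have hlintegral (f : BoundedContinuousFunction Z NNReal) : ∫⁻ z, f z ∂M ≤ ∫⁻ z, f z ∂N := by
    let g : C(Z, ℝ) := ⟨fun z => f z, by fun_prop⟩
    have hg (L : Measure Z) [IsFiniteMeasure L] : ENNReal.ofReal (∫ z, g z ∂L) = ∫⁻ z, f z ∂L := by
      rw [ofReal_integral_eq_lintegral_ofReal (integrable_continuousMap g L)
        (ae_of_all _ fun z => (f z).2)]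
      simp [g]
    rw [← hg, ← hg]
    exact ENNReal.ofReal_le_ofReal (h g fun z => (f z).2)
  have hclosed {F : Set Z} (hF : IsClosed F) : M F ≤ N F :=
    le_of_tendsto_of_tendsto' (HasOuterApproxClosed.tendsto_lintegral_apprSeq hF M)
      (HasOuterApproxClosed.tendsto_lintegral_apprSeq hF N) fun n => hlintegral _
  refine Measure.le_iff.2 fun A hA => ?_
  rw [hA.measure_eq_iSup_isClosed_of_ne_top (measure_ne_top M A)]
  exact iSup₂_le fun F hFA => iSup_le fun hF => (hclosed hF).trans (measure_mono hFA)

theorem measure_le_of_denseRange {M N : Measure Z} [IsFiniteMeasure M] [IsFiniteMeasure N]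
    {u : ι → C(Z, ℝ)} (hu : DenseRange u) (h : ∀ k, ∫ z, |u k| z ∂M ≤ ∫ z, |u k| z ∂N) :
    M ≤ N := by
  have hcont (L : Measure Z) [IsFiniteMeasure L] :
      Continuous fun f : C(Z, ℝ) => ∫ z, |f| z ∂L :=
    (continuous_integral_continuousMap L).comp
      (ContinuousMap.continuous_postcomp ⟨abs, continuous_abs⟩)
  have habs (f : C(Z, ℝ)) : ∫ z, |f| z ∂M ≤ ∫ z, |f| z ∂N :=
    hu.induction_on f (isClosed_le (hcont M) (hcont N)) h
  exact measure_le_of_forall_integral_continuousMap_le fun f hf => by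
    simpa only [abs_of_nonneg hf] using habs f

variable {Ω : Type*} [MeasurableSpace Ω] {Γ : Measure Ω} {T : Ω → Z} {ξ : Ω → ℝ}

theorem setIntegral_preimage_nonpos_of_denseRange (hT : Measurable T) (hξ : Integrable ξ Γ)
    {u : ι → C(Z, ℝ)} (hu : DenseRange u) (h : ∀ k, ∫ ω, |u k| (T ω) * ξ ω ∂Γ ≤ 0)
    {B : Set Z} (hB : MeasurableSet B) : ∫ ω in T ⁻¹' B, ξ ω ∂Γ ≤ 0 := by
  have := isFiniteMeasure_withDensity_ofReal hξ.2
  have := isFiniteMeasure_withDensity_ofReal hξ.neg.2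
  have hint {η : Ω → ℝ} (hη : Integrable η Γ) (f : C(Z, ℝ)) :
      Integrable (fun ω => f (T ω) * η ω) Γ :=
    hη.bdd_mul (c := ‖f‖) (f.continuous.measurable.comp hT).aestronglyMeasurable
      (ae_of_all _ fun ω => f.norm_coe_le_norm _)
  have hle : (Γ.withDensity fun ω => ENNReal.ofReal (ξ ω)).map T ≤
      (Γ.withDensity fun ω => ENNReal.ofReal ((-ξ) ω)).map T := by
    refine measure_le_of_denseRange hu fun k => ?_
    rw [integral_map_withDensity_ofReal hT hξ.aemeasurable (map_continuous _).measurable,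
      integral_map_withDensity_ofReal hT hξ.neg.aemeasurable (map_continuous _).measurable,
      ← sub_nonpos, ← integral_sub (hint hξ.pos_part _) (hint hξ.neg.pos_part _)]
    simpa only [← mul_sub, Pi.neg_apply, max_zero_sub_max_neg_zero_eq_self] using h k
  have hlintegral : ∫⁻ ω in T ⁻¹' B, ENNReal.ofReal (ξ ω) ∂Γ ≤
      ∫⁻ ω in T ⁻¹' B, ENNReal.ofReal (-ξ ω) ∂Γ := by
    simpa only [Measure.map_apply hT hB, withDensity_apply _ (hT hB), Pi.neg_apply] using hle B
  rw [integral_eq_lintegral_pos_part_sub_lintegral_neg_part hξ.integrableOn, sub_nonpos]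
  exact ENNReal.toReal_mono hξ.neg.integrableOn.lintegral_lt_top.ne hlintegral

end TestFunctions

theorem condExp_nonpos_of_forall_setIntegral_nonpos {Ω : Type*} {m m₀ : MeasurableSpace Ω}
    {Γ : Measure Ω} [IsFiniteMeasure Γ] (hm : m ≤ m₀) {ξ : Ω → ℝ} (hξ : Integrable ξ Γ)
    (h : ∀ A, MeasurableSet[m] A → ∫ ω in A, ξ ω ∂Γ ≤ 0) : Γ[ξ | m] ≤ᵐ[Γ] 0 := by
  have hmeas : StronglyMeasurable[m] (Γ[ξ | m]) := stronglyMeasurable_condExp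
  refine ae_le_of_ae_le_trim (ae_le_of_forall_setIntegral_le
    (integrable_condExp.trim hm hmeas) (integrable_zero ..) fun A hA _ => ?_)
  rw [← setIntegral_trim hm hmeas hA, setIntegral_condExp hm hξ hA]
  simpa using h A hA

section Couplings

variable {d : ℕ} {μ ν : Measure (Euc d)} {Γ : Measure (Euc d × Euc d)}

theorem integrable_coord {Ω : Type*} [MeasurableSpace Ω] {ρ : Measure Ω} {f : Ω → Euc d}
    (hf : Integrable f ρ) (i : Fin d) : Integrable (fun ω => f ω i) ρ :=
  (EuclideanSpace.proj i : StrongDual ℝ (Euc d)).integrable_comp hf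

theorem fstSigma_le (d : ℕ) : fstSigma d ≤ Prod.instMeasurableSpace :=
  measurable_fst.comap_le

theorem IsCoupling.integrable_comp_fst {E : Type*} [NormedAddCommGroup E] (hΓ : IsCoupling Γ μ ν)
    {f : Euc d → E} (hf : Integrable f μ) : Integrable (fun p => f p.1) Γ :=
  (hΓ.1.symm ▸ hf).comp_measurable measurable_fst

theorem IsCoupling.integrable_comp_snd {E : Type*} [NormedAddCommGroup E] (hΓ : IsCoupling Γ μ ν)
    {f : Euc d → E} (hf : Integrable f ν) : Integrable (fun p => f p.2) Γ :=
  (hΓ.2.symm ▸ hf).comp_measurable measurable_snd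

theorem isSubmartingaleCoupling_of_forall_setIntegral_nonpos [IsFiniteMeasure Γ]
    (hX : Integrable Prod.fst Γ) (hY : Integrable Prod.snd Γ)
    (h : ∀ i (B : Set (Euc d)), MeasurableSet B →
      ∫ p in Prod.fst ⁻¹' B, (p.1 i - p.2 i) ∂Γ ≤ 0) : IsSubmartingaleCoupling Γ := by
  refine ae_all_iff.2 fun i => ?_
  have hXi : Integrable (fun p : Euc d × Euc d => p.1 i) Γ := integrable_coord hX i
  have hYi : Integrable (fun p : Euc d × Euc d => p.2 i) Γ := integrable_coord hY i
  have hmeas : StronglyMeasurable[fstSigma d] fun p : Euc d × Euc d => p.1 i :=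
    ((by fun_prop : Measurable fun x : Euc d => x i).comp
      (comap_measurable Prod.fst)).stronglyMeasurable
  have hnonpos : Γ[fun p => p.1 i - p.2 i | fstSigma d] ≤ᵐ[Γ] 0 := by
    refine condExp_nonpos_of_forall_setIntegral_nonpos (fstSigma_le d) (hXi.sub hYi) ?_
    rintro _ ⟨B, hB, rfl⟩
    exact h i B hB
  have hcoord : (fun p => (Γ[Prod.snd | fstSigma d]) p i) =ᵐ[Γ] Γ[fun p => p.2 i | fstSigma d] :=
    (EuclideanSpace.proj i : StrongDual ℝ (Euc d)).comp_condExp_comm hY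
  filter_upwards [hnonpos, condExp_sub hXi hYi (fstSigma d), hcoord] with p hp hsub hp_coord
  rw [condExp_of_stronglyMeasurable (fstSigma_le d) hmeas hXi] at hsub
  exact (sub_nonpos.1 (hsub.symm.trans_le hp)).trans_eq hp_coord.symm

theorem IsSubmartingaleCoupling.incConvexOrder [IsFiniteMeasure Γ] (hν : FiniteFirstMoment ν)
    (hΓ : IsCoupling Γ μ ν) (hsub : IsSubmartingaleCoupling Γ) : IncConvexOrder μ ν := by
  intro φ hφ hmono hφμ hφν
  have hcont : Continuous φ := continuousOn_univ.1 (hφ.continuousOn isOpen_univ)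
  have hJensen := hφ.map_condExp_le_univ (fstSigma_le d) hcont.lowerSemicontinuous
    (hΓ.integrable_comp_snd hν) (hΓ.integrable_comp_snd hφν)
  calc ∫ x, φ x ∂μ = ∫ p, φ p.1 ∂Γ := by
        rw [← hΓ.1, integral_map measurable_fst.aemeasurable hcont.aestronglyMeasurable]
    _ ≤ ∫ p, (Γ[fun q => φ q.2 | fstSigma d]) p ∂Γ := by
        refine integral_mono_ae (hΓ.integrable_comp_fst hφμ) integrable_condExp ?_
        filter_upwards [hJensen, hsub] with p hp hle
        exact (hmono _ _ hle).trans hp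
    _ = ∫ p, φ p.2 ∂Γ := integral_condExp (fstSigma_le d)
    _ = ∫ y, φ y ∂ν := by
        rw [← hΓ.2, integral_map measurable_snd.aemeasurable hcont.aestronglyMeasurable]

end Couplings

section Envelope

variable {I E : Type*} [Nonempty I]

theorem convexOn_ciSup [AddCommGroup E] [Module ℝ E] {f : I → E → ℝ}
    (hf : ∀ i, ConvexOn ℝ Set.univ (f i)) (hbdd : ∀ y, BddAbove (Set.range fun i => f i y)) :
    ConvexOn ℝ Set.univ fun y => ⨆ i, f i y := by
  refine ⟨convex_univ, fun y _ z _ s t hs ht hst => ciSup_le fun i => ?_⟩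
  refine ((hf i).2 trivial trivial hs ht hst).trans ?_
  have hy := le_ciSup (hbdd y) i
  have hz := le_ciSup (hbdd z) i
  gcongr

theorem lipschitzWith_ciSup [PseudoMetricSpace E] {K : NNReal} {f : I → E → ℝ}
    (hf : ∀ i, LipschitzWith K (f i)) (hbdd : ∀ y, BddAbove (Set.range fun i => f i y)) :
    LipschitzWith K fun y => ⨆ i, f i y :=
  LipschitzWith.of_le_add_mul K fun y z => ciSup_le fun i =>
    ((hf i).le_add_mul y z).trans (add_le_add_left (le_ciSup (hbdd z) i) _)

end Envelope

theorem integrable_of_lipschitzWith {E F : Type*} [NormedAddCommGroup E] [MeasurableSpace E]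
    [OpensMeasurableSpace E] [NormedAddCommGroup F] [SecondCountableTopologyEither E F]
    {μ : Measure E} [IsFiniteMeasure μ] {K : NNReal} {φ : E → F} (hφ : LipschitzWith K φ)
    (hμ : Integrable (fun x => x) μ) : Integrable φ μ := by
  refine ((integrable_const ‖φ 0‖).add (hμ.norm.const_mul K)).mono'
    hφ.continuous.aestronglyMeasurable (ae_of_all _ fun x => ?_)
  have hx := hφ.norm_sub_le x 0
  rw [sub_zero] at hx
  simpa using (norm_le_norm_add_norm_sub' (φ x) (φ 0)).trans (add_le_add_right hx _)

section Superhedging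

variable {d : ℕ} {μ ν : Measure (Euc d)}

/-- The payoff `H x y` can be superhedged at cost `c`: up to static positions `u`, `v` in the two
marginals costing at most `c`, it is dominated by the gain `G x (x - y)` of a bounded strategy
`G`. Monotonicity of `G x` makes this gain nonpositive in mean under submartingale couplings.
This is the dual notion to feasibility of linear constraints on submartingale couplings. -/
def IsSuperhedged (μ ν : Measure (Euc d)) (H : Euc d → Euc d → ℝ) (c : ℝ) : Prop :=
  ∃ (u v : Euc d → ℝ) (G : Euc d → StrongDual ℝ (Euc d)) (K : NNReal),
    Integrable u μ ∧ Integrable v ν ∧ (∀ x, CoordMono (G x)) ∧ (∀ x, ‖G x‖₊ ≤ K) ∧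
    (∀ x y, H x y ≤ u x + v y + G x (x - y)) ∧ ∫ x, u x ∂μ + ∫ y, v y ∂ν ≤ c

namespace IsSuperhedged

theorem of_fst {f : Euc d → ℝ} (hf : Integrable f μ) :
    IsSuperhedged μ ν (fun x _ => f x) (∫ x, f x ∂μ) :=
  ⟨f, 0, 0, 0, hf, integrable_zero .., fun _ _ _ _ => le_rfl, fun _ => by simp, by simp, by simp⟩

theorem of_snd {f : Euc d → ℝ} (hf : Integrable f ν) :
    IsSuperhedged μ ν (fun _ y => f y) (∫ y, f y ∂ν) :=
  ⟨0, f, 0, 0, integrable_zero .., hf, fun _ _ _ _ => le_rfl, fun _ => by simp, by simp, by simp⟩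

theorem add {H H' : Euc d → Euc d → ℝ} {c c' : ℝ} (h : IsSuperhedged μ ν H c)
    (h' : IsSuperhedged μ ν H' c') : IsSuperhedged μ ν (H + H') (c + c') := by
  obtain ⟨u, v, G, K, hu, hv, hG, hK, hH, hc⟩ := h
  obtain ⟨u', v', G', K', hu', hv', hG', hK', hH', hc'⟩ := h'
  refine ⟨u + u', v + v', G + G', K + K', hu.add hu', hv.add hv',
    fun x y z hyz => add_le_add (hG x y z hyz) (hG' x y z hyz),
    fun x => (nnnorm_add_le _ _).trans (add_le_add (hK x) (hK' x)), fun x y => ?_, ?_⟩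
  · simp only [Pi.add_apply, add_apply]
    linarith [hH x y, hH' x y]
  · rw [integral_add' hu hu', integral_add' hv hv']
    linarith

theorem smul {H : Euc d → Euc d → ℝ} {c : ℝ} (h : IsSuperhedged μ ν H c) {w : ℝ} (hw : 0 ≤ w) :
    IsSuperhedged μ ν (w • H) (w * c) := by
  obtain ⟨u, v, G, K, hu, hv, hG, hK, hH, hc⟩ := h
  have hG' (x : Euc d) : CoordMono (w • G x) := fun y z hyz =>
    mul_le_mul_of_nonneg_left (hG x y z hyz) hw
  have hK' (x : Euc d) : ‖w • G x‖₊ ≤ ‖w‖₊ * K :=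
    (nnnorm_smul w (G x)).trans_le (mul_le_mul_right (hK x) _)
  have hH' (x y : Euc d) : w * H x y ≤ w * u x + w * v y + w * G x (x - y) := by
    simpa only [mul_add] using mul_le_mul_of_nonneg_left (hH x y) hw
  have hc' : ∫ x, w * u x ∂μ + ∫ y, w * v y ∂ν ≤ w * c := by
    simpa only [integral_const_mul, mul_add] using mul_le_mul_of_nonneg_left hc hw
  exact ⟨_, _, _, _, hu.const_mul w, hv.const_mul w, hG', hK', hH', hc'⟩

theorem sum {ι : Type*} {H : ι → Euc d → Euc d → ℝ} {c : ι → ℝ}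
    (h : ∀ i, IsSuperhedged μ ν (H i) (c i)) (s : Finset ι) {w : ι → ℝ} (hw : 0 ≤ w) :
    IsSuperhedged μ ν (∑ i ∈ s, w i • H i) (∑ i ∈ s, w i * c i) := by
  classical
  induction s using Finset.induction_on with
  | empty =>
    have hzero : IsSuperhedged μ ν 0 (∫ _, 0 ∂μ) := of_fst (integrable_zero ..)
    simpa only [Finset.sum_empty, integral_zero] using hzero
  | insert a s ha ih =>
    simp only [Finset.sum_insert ha]
    exact ((h a).smul (hw a)).add ih

theorem le_of_incConvexOrder [IsProbabilityMeasure μ] [IsProbabilityMeasure ν]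
    (hμ : FiniteFirstMoment μ) (hν : FiniteFirstMoment ν) (hμν : IncConvexOrder μ ν)
    {H : Euc d → Euc d → ℝ} {c m : ℝ} (h : IsSuperhedged μ ν H c) (hm : ∀ x y, m ≤ H x y) :
    m ≤ c := by
  obtain ⟨u, v, G, K, hu, hv, hG, hK, hH, hc⟩ := h
  let A (x y : Euc d) : ℝ := G x y + (m - u x - G x x)
  have hAv (x y : Euc d) : A x y ≤ v y := by
    have hxy := (hm x y).trans (hH x y)
    rw [map_sub] at hxy
    simp only [A]
    linarith
  have hbdd (y : Euc d) : BddAbove (Set.range fun x => A x y) :=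
    ⟨v y, Set.forall_mem_range.2 fun x => hAv x y⟩
  -- `φ` is convex and increasing, lies below `v`, and lies above `m - u` because `A x x = m - u x`.
  let φ (y : Euc d) : ℝ := ⨆ x, A x y
  have hconvex : ConvexOn ℝ Set.univ φ :=
    convexOn_ciSup (fun x => ((G x).toLinearMap.convexOn convex_univ).add_const _) hbdd
  have hmono : CoordMono φ := fun y z hyz =>
    ciSup_mono (hbdd z) fun x => add_le_add_left (hG x y z hyz) _
  have hlip : LipschitzWith K φ := lipschitzWith_ciSup (fun x => by
    simpa only [add_zero] using
      ((G x).lipschitz.weaken (hK x)).add (LipschitzWith.const (m - u x - G x x))) hbdd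
  have hφμ : Integrable φ μ := integrable_of_lipschitzWith hlip hμ
  have hφν : Integrable φ ν := integrable_of_lipschitzWith hlip hν
  have hu_le : m - ∫ x, u x ∂μ ≤ ∫ x, φ x ∂μ := calc
    m - ∫ x, u x ∂μ = ∫ x, (m - u x) ∂μ := by simp [integral_sub (integrable_const m) hu]
    _ ≤ ∫ x, φ x ∂μ := integral_mono ((integrable_const m).sub hu) hφμ fun x =>
      (by simp [A] : m - u x = A x x).trans_le (le_ciSup (hbdd x) x)
  have hv_le : ∫ y, φ y ∂ν ≤ ∫ y, v y ∂ν := integral_mono hφν hv fun y => ciSup_le (hAv · y)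
  linarith [hμν φ hconvex hmono hφμ hφν]

end IsSuperhedged

end Superhedging

section Truncation

/-- The continuous extension to `[-∞, ∞]` of the truncation of real numbers to `[-N, N]`. -/
def truncate (N : ℕ) : C(EReal, ℝ) where
  toFun a := (max ((-N : ℝ) : EReal) (min a (N : ℝ))).toReal
  continuous_toFun := EReal.continuousOn_toReal.comp_continuous (by fun_prop) fun a => by
    simp only [Set.mem_compl_iff, Set.mem_insert_iff, Set.mem_singleton_iff, not_or]
    exact ⟨((EReal.bot_lt_coe _).trans_le (le_max_left _ _)).ne',
      (max_lt (EReal.coe_lt_top _) ((min_le_right _ _).trans_lt (EReal.coe_lt_top _))).ne⟩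

theorem truncate_coe (N : ℕ) (r : ℝ) : truncate N r = max (-N : ℝ) (min r N) := by
  change (max ((-N : ℝ) : EReal) (min (r : EReal) (N : ℝ))).toReal = _
  rw [← EReal.coe_strictMono.monotone.map_min, ← EReal.coe_strictMono.monotone.map_max,
    EReal.toReal_coe]

theorem truncate_of_abs_le {N : ℕ} {r : ℝ} (h : |r| ≤ N) : truncate N r = r := by
  rw [truncate_coe, min_eq_left (abs_le.1 h).2, max_eq_right (abs_le.1 h).1]

theorem abs_truncate_le (N : ℕ) (r : ℝ) : |truncate N r| ≤ |r| := by
  rw [truncate_coe]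
  grind

theorem abs_sub_truncate_le (N : ℕ) (r : ℝ) : |r - truncate N r| ≤ |r| := by
  rw [truncate_coe]
  grind

theorem tendsto_truncate (r : ℝ) : Tendsto (fun N => truncate N r) atTop (nhds r) := by
  obtain ⟨M, hM⟩ := exists_nat_ge |r|
  refine tendsto_const_nhds.congr' ?_
  filter_upwards [eventually_ge_atTop M] with N hN
  exact (truncate_of_abs_le (hM.trans (Nat.cast_le.2 hN))).symm

variable {Ω : Type*} [MeasurableSpace Ω] {μ : Measure Ω} {f f' g : Ω → ℝ}

theorem aestronglyMeasurable_truncate (hf : AEStronglyMeasurable f μ) (N : ℕ) :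
    AEStronglyMeasurable (fun ω => truncate N (f ω)) μ :=
  ((truncate N).continuous.comp continuous_coe_real_ereal).comp_aestronglyMeasurable hf

theorem integrable_abs_sub_truncate (hf : Integrable f μ) (N : ℕ) :
    Integrable (fun ω => |f ω - truncate N (f ω)|) μ :=
  (hf.mono (hf.1.sub (aestronglyMeasurable_truncate hf.1 N))
    (ae_of_all _ fun ω => abs_sub_truncate_le N (f ω))).abs

theorem tendsto_integral_abs_sub_truncate (hf : Integrable f μ) :
    Tendsto (fun N => ∫ ω, |f ω - truncate N (f ω)| ∂μ) atTop (nhds 0) := by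
  have hlim (ω : Ω) : Tendsto (fun N => |f ω - truncate N (f ω)|) atTop (nhds 0) := by
    simpa using ((tendsto_truncate (f ω)).const_sub (f ω)).abs
  simpa using tendsto_integral_of_dominated_convergence (fun ω => |f ω|)
    (fun N => (integrable_abs_sub_truncate hf N).1) hf.abs
    (fun N => ae_of_all _ fun ω => by simpa using abs_sub_truncate_le N (f ω))
    (ae_of_all _ hlim)

theorem tendsto_integral_mul_truncate_sub_truncate {C : ℝ} (hg : AEStronglyMeasurable g μ)
    (hgC : ∀ ω, |g ω| ≤ C) (hf : Integrable f μ) (hf' : Integrable f' μ) :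
    Tendsto (fun N => ∫ ω, g ω * (truncate N (f ω) - truncate N (f' ω)) ∂μ) atTop
      (nhds (∫ ω, g ω * (f ω - f' ω) ∂μ)) := by
  refine tendsto_integral_of_dominated_convergence (fun ω => C * (|f ω| + |f' ω|))
    (fun N => hg.mul ((aestronglyMeasurable_truncate hf.1 N).sub
      (aestronglyMeasurable_truncate hf'.1 N)))
    ((hf.abs.add hf'.abs).const_mul C) (fun N => ae_of_all _ fun ω => ?_)
    (ae_of_all _ fun ω => ((tendsto_truncate _).sub (tendsto_truncate _)).const_mul _)
  rw [Real.norm_eq_abs, abs_mul]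
  gcongr
  · exact (abs_nonneg _).trans (hgC ω)
  · exact hgC ω
  · exact (abs_sub _ _).trans (add_le_add (abs_truncate_le _ _) (abs_truncate_le _ _))

end Truncation

section Compactification

variable {d : ℕ}

/-- The embedding of `ℝ^d` into its compactification `[-∞, ∞]^d`. -/
def toExtended (x : Euc d) : Fin d → EReal := fun i => (x i : ℝ)

theorem continuous_toExtended : Continuous (toExtended (d := d)) :=
  continuous_pi fun i => continuous_coe_real_ereal.comp (by fun_prop)

theorem toExtended_injective : Function.Injective (toExtended (d := d)) := fun x y hxy => by
  ext i
  exact EReal.coe_injective (congrFun hxy i)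

theorem measurableEmbedding_toExtended : MeasurableEmbedding (toExtended (d := d)) :=
  continuous_toExtended.measurableEmbedding toExtended_injective

theorem integrable_continuousMap_toExtended (f : C(Fin d → EReal, ℝ)) (μ : Measure (Euc d))
    [IsFiniteMeasure μ] : Integrable (fun x => f (toExtended x)) μ :=
  (integrable_continuousMap f _).comp_measurable measurableEmbedding_toExtended.measurable

/-- A countable dense family of continuous functions on `[-∞, ∞]^d`, whose absolute values serve
as test functions. -/
def denseFun (d : ℕ) : ℕ → C(Fin d → EReal, ℝ) := TopologicalSpace.denseSeq _

theorem denseRange_denseFun : DenseRange (denseFun d) := TopologicalSpace.denseRange_denseSeq _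

/-- Indices of the constraints that single out the submartingale couplings: test functions of the
first marginal, test functions of the second marginal, and triples consisting of a test function,
a truncation level and a coordinate for the submartingale property. -/
abbrev ConstraintIndex (d : ℕ) : Type := ℕ ⊕ ℕ ⊕ ℕ × ℕ × Fin d

/-- The left-hand sides of the constraints defining `IsFeasible`. -/
def constraintFun : ConstraintIndex d → C((Fin d → EReal) × (Fin d → EReal), ℝ)
  | .inl k => |denseFun d k|.comp .fst
  | .inr (.inl k) => |denseFun d k|.comp .snd
  | .inr (.inr (k, N, i)) =>
    |denseFun d k|.comp .fst *
      ((truncate N).comp ((ContinuousMap.eval i).comp .fst) -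
        (truncate N).comp ((ContinuousMap.eval i).comp .snd))

/-- The right-hand sides of the constraints defining `IsFeasible`. In a submartingale constraint it
compensates for the truncation and tends to `0` as the truncation level grows. -/
def constraintBound (μ ν : Measure (Euc d)) : ConstraintIndex d → ℝ
  | .inl k => ∫ x, |denseFun d k| (toExtended x) ∂μ
  | .inr (.inl k) => ∫ y, |denseFun d k| (toExtended y) ∂ν
  | .inr (.inr (k, N, i)) =>
    ∫ x, ‖denseFun d k‖ * |x i - truncate N (x i)| ∂μ +
      ∫ y, ‖denseFun d k‖ * |y i - truncate N (y i)| ∂ν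

theorem IsSuperhedged.mul_truncate_sub_truncate {μ ν : Measure (Euc d)}
    (hμ : FiniteFirstMoment μ) (hν : FiniteFirstMoment ν) {g : Euc d → ℝ} {C : NNReal}
    (hg : ∀ x, 0 ≤ g x) (hgC : ∀ x, g x ≤ C) (N : ℕ) (i : Fin d) :
    IsSuperhedged μ ν (fun x y => g x * (truncate N (x i) - truncate N (y i)))
      (∫ x, C * |x i - truncate N (x i)| ∂μ + ∫ y, C * |y i - truncate N (y i)| ∂ν) := by
  let G (x : Euc d) : StrongDual ℝ (Euc d) := g x • EuclideanSpace.proj i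
  have hmono (x : Euc d) : CoordMono (G x) := fun y z hyz =>
    mul_le_mul_of_nonneg_left (hyz i) (hg x)
  have hG (x : Euc d) : ‖G x‖₊ ≤ C * ‖(EuclideanSpace.proj i : StrongDual ℝ (Euc d))‖₊ := by
    refine (nnnorm_smul _ _).trans_le ?_
    gcongr
    rw [← NNReal.coe_le_coe, coe_nnnorm, Real.norm_of_nonneg (hg x)]
    exact hgC x
  have hbound (x : Euc d) (a : ℝ) : g x * a ≤ C * |a| :=
    (mul_le_mul_of_nonneg_left (le_abs_self a) (hg x)).trans
      (mul_le_mul_of_nonneg_right (hgC x) (abs_nonneg a))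
  refine ⟨_, _, G, _, (integrable_abs_sub_truncate (integrable_coord hμ i) N).const_mul _,
    (integrable_abs_sub_truncate (integrable_coord hν i) N).const_mul _, hmono, hG,
    fun x y => ?_, le_rfl⟩
  calc g x * (truncate N (x i) - truncate N (y i))
      = g x * (truncate N (x i) - x i) + g x * (y i - truncate N (y i)) + g x * (x i - y i) := by
        ring
    _ ≤ C * |x i - truncate N (x i)| + C * |y i - truncate N (y i)| + G x (x - y) :=
        add_le_add (add_le_add (abs_sub_comm (x i) _ ▸ hbound x _) (hbound x _)) le_rfl

theorem isSuperhedged_constraintFun {μ ν : Measure (Euc d)} [IsFiniteMeasure μ] [IsFiniteMeasure ν]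
    (hμ : FiniteFirstMoment μ) (hν : FiniteFirstMoment ν) (j : ConstraintIndex d) :
    IsSuperhedged μ ν (fun x y => constraintFun j (toExtended x, toExtended y))
      (constraintBound μ ν j) := by
  match j with
  | .inl k => exact .of_fst (integrable_continuousMap_toExtended |denseFun d k| μ)
  | .inr (.inl k) => exact .of_snd (integrable_continuousMap_toExtended |denseFun d k| ν)
  | .inr (.inr (k, N, i)) =>
    exact .mul_truncate_sub_truncate (C := ‖denseFun d k‖₊) hμ hν (fun x => abs_nonneg _)
      (fun x => (denseFun d k).norm_coe_le_norm _) N i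

theorem measurable_constraintBound {S : Type*} [MeasurableSpace S] (P Q : Kernel S (Euc d))
    [IsSFiniteKernel P] [IsSFiniteKernel Q] : Measurable fun θ => constraintBound (P θ) (Q θ) := by
  have hintegral (κ : Kernel S (Euc d)) [IsSFiniteKernel κ] {f : Euc d → ℝ} (hf : Measurable f) :
      Measurable fun θ => ∫ x, f x ∂(κ θ) :=
    (StronglyMeasurable.integral_kernel hf.stronglyMeasurable).measurable
  have htest (k : ℕ) : Measurable fun x => |denseFun d k| (toExtended x) :=
    ((map_continuous |denseFun d k|).comp continuous_toExtended).measurable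
  have hrem (k N : ℕ) (i : Fin d) :
      Measurable fun x : Euc d => ‖denseFun d k‖ * |x i - truncate N (x i)| := by
    have htruncate : Continuous fun x : Euc d => truncate N (x i) :=
      (truncate N).continuous.comp (continuous_coe_real_ereal.comp (by fun_prop))
    have hcoord : Continuous fun x : Euc d => x i := by fun_prop
    exact ((hcoord.sub htruncate).abs.const_mul _).measurable
  refine measurable_pi_lambda _ fun j => ?_
  match j with
  | .inl k => exact hintegral P (htest k)
  | .inr (.inl k) => exact hintegral Q (htest k)
  | .inr (.inr (k, N, i)) => exact (hintegral P (hrem k N i)).add (hintegral Q (hrem k N i))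

/-- The constraints on a measure on the compactified product space which, for probability measures,
characterize the images of the submartingale couplings of `μ` and `ν`. -/
def IsFeasible (μ ν : Measure (Euc d)) (l : Measure ((Fin d → EReal) × (Fin d → EReal))) : Prop :=
  ∀ j, ∫ z, constraintFun j z ∂l ≤ constraintBound μ ν j

theorem exists_isFeasible_of_incConvexOrder {μ ν : Measure (Euc d)} [IsProbabilityMeasure μ]
    [IsProbabilityMeasure ν] (hμ : FiniteFirstMoment μ) (hν : FiniteFirstMoment ν)
    (hμν : IncConvexOrder μ ν) :
    ∃ l : ProbabilityMeasure ((Fin d → EReal) × (Fin d → EReal)), IsFeasible μ ν l := by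
  refine exists_probabilityMeasure_forall_integral_le _ _ fun s w hw => ?_
  have hcont : Continuous fun z : (Fin d → EReal) × (Fin d → EReal) =>
      ∑ j ∈ s, w j * constraintFun j z := by fun_prop
  obtain ⟨z, -, hz⟩ := isCompact_univ.exists_isMinOn Set.univ_nonempty hcont.continuousOn
  refine ⟨z, (IsSuperhedged.sum (isSuperhedged_constraintFun hμ hν) s hw).le_of_incConvexOrder
    hμ hν hμν fun x y => ?_⟩
  simpa using hz (Set.mem_univ (toExtended x, toExtended y))

theorem map_eq_map_toExtended {Ω : Type*} [MeasurableSpace Ω] {l : Measure Ω}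
    [IsProbabilityMeasure l] {μ : Measure (Euc d)} [IsProbabilityMeasure μ]
    {T : Ω → Fin d → EReal} (hT : Measurable T)
    (h : ∀ k, ∫ ω, |denseFun d k| (T ω) ∂l ≤ ∫ x, |denseFun d k| (toExtended x) ∂μ) :
    l.map T = μ.map toExtended := by
  have := Measure.isProbabilityMeasure_map (μ := l) hT.aemeasurable
  have := Measure.isProbabilityMeasure_map (μ := μ)
    measurableEmbedding_toExtended.measurable.aemeasurable
  refine Measure.eq_of_le_of_isProbabilityMeasure
    (measure_le_of_denseRange denseRange_denseFun fun k => ?_)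
  rw [integral_map hT.aemeasurable (map_continuous _).aestronglyMeasurable,
    measurableEmbedding_toExtended.integral_map]
  exact h k

theorem measurableEmbedding_prodMap_toExtended :
    MeasurableEmbedding (Prod.map (toExtended (d := d)) (toExtended (d := d))) :=
  measurableEmbedding_toExtended.prodMap measurableEmbedding_toExtended

namespace IsFeasible

variable {μ ν : Measure (Euc d)} [IsProbabilityMeasure μ] [IsProbabilityMeasure ν]

theorem ae_mem_range {l : Measure ((Fin d → EReal) × (Fin d → EReal))} [IsProbabilityMeasure l]
    (h : IsFeasible μ ν l) :
    ∀ᵐ z ∂l, z ∈ Set.range (Prod.map (toExtended (d := d)) (toExtended (d := d))) := by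
  have hrange (ρ : Measure (Euc d)) : ∀ᵐ a ∂ρ.map toExtended, a ∈ Set.range (toExtended (d := d)) :=
    ae_map_mem_range _ measurableEmbedding_toExtended.measurableSet_range ρ
  have hfst : l.map Prod.fst = μ.map toExtended :=
    map_eq_map_toExtended measurable_fst fun k => h (.inl k)
  have hsnd : l.map Prod.snd = ν.map toExtended :=
    map_eq_map_toExtended measurable_snd fun k => h (.inr (.inl k))
  filter_upwards [ae_of_ae_map measurable_fst.aemeasurable (hfst ▸ hrange μ),
    ae_of_ae_map measurable_snd.aemeasurable (hsnd ▸ hrange ν)] with z hz₁ hz₂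
  exact Set.range_prodMap ▸ ⟨hz₁, hz₂⟩

variable {Γ : Measure (Euc d × Euc d)} [IsProbabilityMeasure Γ]

theorem isCoupling (h : IsFeasible μ ν (Γ.map (Prod.map toExtended toExtended))) :
    IsCoupling Γ μ ν := by
  have hemb := measurableEmbedding_toExtended (d := d)
  have hfst : (Γ.map Prod.fst).map toExtended = μ.map toExtended := by
    rw [Measure.map_map hemb.measurable measurable_fst]
    refine map_eq_map_toExtended (hemb.measurable.comp measurable_fst) fun k => ?_
    have hk := h (.inl k)
    rwa [measurableEmbedding_prodMap_toExtended.integral_map] at hk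
  have hsnd : (Γ.map Prod.snd).map toExtended = ν.map toExtended := by
    rw [Measure.map_map hemb.measurable measurable_snd]
    refine map_eq_map_toExtended (hemb.measurable.comp measurable_snd) fun k => ?_
    have hk := h (.inr (.inl k))
    rwa [measurableEmbedding_prodMap_toExtended.integral_map] at hk
  exact ⟨hemb.map_injective hfst, hemb.map_injective hsnd⟩

theorem integral_mul_sub_nonpos (hμ : FiniteFirstMoment μ) (hν : FiniteFirstMoment ν)
    (h : IsFeasible μ ν (Γ.map (Prod.map toExtended toExtended))) (k : ℕ) (i : Fin d) :
    ∫ p, |denseFun d k| (toExtended p.1) * (p.1 i - p.2 i) ∂Γ ≤ 0 := by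
  have hX : Integrable (fun p : Euc d × Euc d => p.1 i) Γ :=
    integrable_coord (h.isCoupling.integrable_comp_fst hμ) i
  have hY : Integrable (fun p : Euc d × Euc d => p.2 i) Γ :=
    integrable_coord (h.isCoupling.integrable_comp_snd hν) i
  have hbound (N : ℕ) : ∫ p, |denseFun d k| (toExtended p.1) *
      (truncate N (p.1 i) - truncate N (p.2 i)) ∂Γ ≤
      ‖denseFun d k‖ * ∫ x, |x i - truncate N (x i)| ∂μ +
        ‖denseFun d k‖ * ∫ y, |y i - truncate N (y i)| ∂ν := by
    have hj := h (.inr (.inr (k, N, i)))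
    rw [measurableEmbedding_prodMap_toExtended.integral_map] at hj
    simp only [constraintBound, integral_const_mul] at hj
    exact hj
  have htest : AEStronglyMeasurable (fun p : Euc d × Euc d => |denseFun d k| (toExtended p.1)) Γ :=
    ((map_continuous |denseFun d k|).comp
      (continuous_toExtended.comp continuous_fst)).aestronglyMeasurable
  refine le_of_tendsto_of_tendsto' (tendsto_integral_mul_truncate_sub_truncate htest
    (fun p => (|denseFun d k|).norm_coe_le_norm _) hX hY) ?_ hbound
  simpa using ((tendsto_integral_abs_sub_truncate (integrable_coord hμ i)).const_mul
    ‖denseFun d k‖).add ((tendsto_integral_abs_sub_truncate (integrable_coord hν i)).const_mul _)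

theorem isSubmartingaleCoupling (hμ : FiniteFirstMoment μ) (hν : FiniteFirstMoment ν)
    (h : IsFeasible μ ν (Γ.map (Prod.map toExtended toExtended))) : IsSubmartingaleCoupling Γ := by
  have hX : Integrable (fun p : Euc d × Euc d => p.1) Γ := h.isCoupling.integrable_comp_fst hμ
  have hY : Integrable (fun p : Euc d × Euc d => p.2) Γ := h.isCoupling.integrable_comp_snd hν
  refine isSubmartingaleCoupling_of_forall_setIntegral_nonpos hX hY fun i B hB => ?_
  have hpreimage : Prod.fst ⁻¹' B =
      (fun p : Euc d × Euc d => toExtended p.1) ⁻¹' (toExtended '' B) := by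
    ext p
    exact toExtended_injective.mem_set_image.symm
  rw [hpreimage]
  exact setIntegral_preimage_nonpos_of_denseRange
    (measurableEmbedding_toExtended.measurable.comp measurable_fst)
    ((integrable_coord hX i).sub (integrable_coord hY i)) denseRange_denseFun
    (h.integral_mul_sub_nonpos hμ hν · i) (measurableEmbedding_toExtended.measurableSet_image.2 hB)

end IsFeasible

end Compactification

theorem exists_kernel_isSubmartingaleCoupling {d : ℕ} {S : Type*} [MeasurableSpace S]
    (P Q : Kernel S (Euc d)) [IsMarkovKernel P] [IsMarkovKernel Q]
    (hP : ∀ θ, FiniteFirstMoment (P θ)) (hQ : ∀ θ, FiniteFirstMoment (Q θ))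
    (hPQ : ∀ θ, IncConvexOrder (P θ) (Q θ)) :
    ∃ R : Kernel S (Euc d × Euc d), IsMarkovKernel R ∧
      ∀ θ, IsCoupling (R θ) (P θ) (Q θ) ∧ IsSubmartingaleCoupling (R θ) := by
  obtain ⟨κ, hκ, hfeas⟩ : ∃ κ : Kernel S ((Fin d → EReal) × (Fin d → EReal)),
      IsMarkovKernel κ ∧ ∀ θ, IsFeasible (P θ) (Q θ) (κ θ) :=
    exists_kernel_forall_integral_le constraintFun (measurable_constraintBound P Q)
      fun θ => exists_isFeasible_of_incConvexOrder (hP θ) (hQ θ) (hPQ θ)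
  have hemb := measurableEmbedding_prodMap_toExtended (d := d)
  have hrange (θ : S) : κ θ (Set.range (Prod.map toExtended toExtended)) = 1 :=
    (mem_ae_iff_prob_eq_one hemb.measurableSet_range).1 (hfeas θ).ae_mem_range
  have hmap (θ : S) : (κ.comapRight hemb θ).map (Prod.map toExtended toExtended) = κ θ := by
    rw [Kernel.comapRight_apply, hemb.map_comap,
      Measure.restrict_eq_self_of_ae_mem (hfeas θ).ae_mem_range]
  have hR : IsMarkovKernel (κ.comapRight hemb) := Kernel.IsMarkovKernel.comapRight κ hemb hrange
  have hfeasR (θ : S) := (hmap θ).symm ▸ hfeas θ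
  exact ⟨κ.comapRight hemb, hR, fun θ =>
    ⟨(hfeasR θ).isCoupling, (hfeasR θ).isSubmartingaleCoupling (hP θ) (hQ θ)⟩⟩

/-- Kernel version of Strassen's theorem (increasing convex order): P_θ ≤icx Q_θ for
all θ iff P and Q admit a pointwise submartingale coupling. -/
theorem strassen_kernel_submartingale_coupling
    (d : ℕ) (hd : 1 ≤ d) {S : Type} [MeasurableSpace S]
    (P Q : Kernel S (Euc d)) [IsMarkovKernel P] [IsMarkovKernel Q]
    (hP : ∀ θ, FiniteFirstMoment (P θ)) (hQ : ∀ θ, FiniteFirstMoment (Q θ)) :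
    (∀ θ, IncConvexOrder (P θ) (Q θ)) ↔
      ∃ R : Kernel S (Euc d × Euc d), IsMarkovKernel R ∧
        ∀ θ, IsCoupling (R θ) (P θ) (Q θ) ∧ IsSubmartingaleCoupling (R θ) :=
  ⟨exists_kernel_isSubmartingaleCoupling P Q hP hQ,
    fun ⟨_, _, hR⟩ θ => IsSubmartingaleCoupling.incConvexOrder (hQ θ) (hR θ).1 (hR θ).2⟩
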